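/- Let ψ be the (σ,λ)-GFF on V_N and f_N^ψ(β) = (1/log N²) log Σ_{v∈V_N} e^{βψ_v}. For every β > 0 and every 1 ≤ p < ∞, the family {|f_N^ψ(β)|^p}_{N∈ℕ} is uniformly integrable: lim_{α→∞} sup_{N∈ℕ} E[|f_N^ψ(β)|^p · 1_{{|f_N^ψ(β)|^p > α}}] = 0. -/

import Mathlib

open Filter
open scoped Classical

noncomputable section GFFCommon

/-- Vertices of `ℤ²`. -/
abbrev Vtx : Type := ℤ × ℤ

/-- Sample space: a real-valued field indexed by the vertices of `ℤ²`. -/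
abbrev FieldSp : Type := Vtx → ℝ

/-- The box `V_N = {0,1,…,N}²`. -/
def VN (N : ℕ) : Finset Vtx := Finset.Icc (0, 0) ((N : ℤ), (N : ℤ))

/-- The boundary `∂B` of a finite box `B ⊆ ℤ²`:
vertices of `B` having a (Euclidean distance 1) neighbour outside `B`. -/
def bdry (B : Finset Vtx) : Finset Vtx :=
  B.filter fun v =>
    ¬((v.1 + 1, v.2) ∈ B ∧ (v.1 - 1, v.2) ∈ B ∧ (v.1, v.2 + 1) ∈ B ∧ (v.1, v.2 - 1) ∈ B)

/-- The interior `B° = B ∖ ∂B`. -/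
def intr (B : Finset Vtx) : Finset Vtx := B \ bdry B

/-- The neighbourhood `[v]_λ` of `v` in `V_N`. -/
def nbhd (N : ℕ) (lam : ℝ) (v : Vtx) : Finset Vtx :=
  if lam = 0 then VN N
  else if lam = 1 then {v}
  else (VN N).filter fun w =>
    |(w.1 : ℝ) - (v.1 : ℝ)| ≤ (N : ℝ) ^ ((1 : ℝ) - lam) / 2 ∧
    |(w.2 : ℝ) - (v.2 : ℝ)| ≤ (N : ℝ) ^ ((1 : ℝ) - lam) / 2

/-- The σ-algebra `F_{∂[v]_λ ∪ [v]_λ^c}`, generated by the field variables on the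
boundary of `[v]_λ` and those outside of it. -/
def scaleAlg (N : ℕ) (lam : ℝ) (v : Vtx) : MeasurableSpace FieldSp :=
  ⨆ w ∈ {w : Vtx | w ∈ VN N ∧ w ∉ intr (nbhd N lam v)},
    MeasurableSpace.comap (fun ω : FieldSp => ω w) inferInstance

/-- `G` is the Green function of simple random walk killed on `∂B`, normalized by `π/2`:
it vanishes unless both arguments are in `B°`, and in `B°` it satisfies the
first-step (discrete Poisson equation) characterization
`G(x,y) = (1/4)·Σ_{x'∼x} G(x',y) + (π/2)·1_{x=y}`. -/
def IsGreenFn (B : Finset Vtx) (G : Vtx → Vtx → ℝ) : Prop :=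
  (∀ x y : Vtx, x ∉ intr B ∨ y ∉ intr B → G x y = 0) ∧
  ∀ y ∈ intr B, ∀ x ∈ intr B,
    G x y = (G (x.1 + 1, x.2) y + G (x.1 - 1, x.2) y
        + G (x.1, x.2 + 1) y + G (x.1, x.2 - 1) y) / 4
      + (Real.pi / 2) * (if x = y then 1 else 0)

/-- `P` is the law (on the canonical space `FieldSp`) of the Gaussian free field on `V_N`:
a centered Gaussian field with covariance the Green function `G_{V_N}`. -/
def IsGFF (N : ℕ) (P : MeasureTheory.Measure FieldSp) : Prop :=
  MeasureTheory.IsProbabilityMeasure P ∧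
  ∃ G : Vtx → Vtx → ℝ, IsGreenFn (VN N) G ∧
    ∀ c : Vtx → ℝ,
      P.map (fun ω => ∑ v ∈ VN N, c v * ω v) =
        ProbabilityTheory.gaussianReal 0 (Real.toNNReal (∑ v ∈ VN N, ∑ w ∈ VN N, c v * c w * G v w))

open MeasureTheory in
/-- `φ_v(λ) = E[φ_v | F_{∂[v]_λ ∪ [v]_λ^c}]`. -/
def phiScale (N : ℕ) (P : MeasureTheory.Measure FieldSp) (v : Vtx) (lam : ℝ) : FieldSp → ℝ :=
  P[fun ω : FieldSp => ω v | scaleAlg N lam v]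

/-- Admissible parameters `(σ,λ)`: `σ_1,…,σ_M > 0` and `0 = λ_0 < λ_1 < … < λ_M = 1`. -/
def ScaleParams (M : ℕ) (sigv lamv : ℕ → ℝ) : Prop :=
  1 ≤ M ∧ (∀ i ∈ Finset.Icc 1 M, 0 < sigv i) ∧
  lamv 0 = 0 ∧ lamv M = 1 ∧ ∀ i, i < M → lamv i < lamv (i + 1)

/-- The `(σ,λ)`-GFF: `ψ_v = Σ_{i=1}^M σ_i (φ_v(λ_i) − φ_v(λ_{i−1}))`. -/
def psiFld (N M : ℕ) (sigv lamv : ℕ → ℝ) (P : MeasureTheory.Measure FieldSp) (v : Vtx) : FieldSp → ℝ :=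
  fun ω => ∑ i ∈ Finset.Icc 1 M, sigv i * (phiScale N P v (lamv i) ω - phiScale N P v (lamv (i - 1)) ω)

open MeasureTheory in
/-- `ψ_v(λ) = E[ψ_v | F_{∂[v]_λ ∪ [v]_λ^c}]`. -/
def psiScale (N M : ℕ) (sigv lamv : ℕ → ℝ) (P : MeasureTheory.Measure FieldSp) (v : Vtx) (lam : ℝ) :
    FieldSp → ℝ :=
  P[psiFld N M sigv lamv P v | scaleAlg N lam v]

/-- The increment `ψ_v(λ,λ') = ψ_v(λ') − ψ_v(λ)`. -/
def psiInc (N M : ℕ) (sigv lamv : ℕ → ℝ) (P : MeasureTheory.Measure FieldSp) (v : Vtx) (lam lam' : ℝ) :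
    FieldSp → ℝ :=
  fun ω => psiScale N M sigv lamv P v lam' ω - psiScale N M sigv lamv P v lam ω

/-- The step function `σ(s) = σ_1 1_{{0}}(s) + Σ_{i=1}^M σ_i 1_{(λ_{i−1},λ_i]}(s)`. -/
def stepFn (M : ℕ) (sigv lamv : ℕ → ℝ) (s : ℝ) : ℝ :=
  (if s = 0 then sigv 1 else 0) +
  ∑ i ∈ Finset.Icc 1 M, if lamv (i - 1) < s ∧ s ≤ lamv i then sigv i else 0

/-- `𝒥_f(s) = ∫_0^s f(r) dr`. -/
def Jint (f : ℝ → ℝ) (s : ℝ) : ℝ := ∫ r in (0:ℝ)..s, f r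

/-- `𝒥_f(s₁,s₂) = ∫_{s₁}^{s₂} f(r) dr`. -/
def Jint2 (f : ℝ → ℝ) (s₁ s₂ : ℝ) : ℝ := ∫ r in s₁..s₂, f r

/-- The speed function `𝒥_{σ²}`. -/
def Jsig2 (M : ℕ) (sigv lamv : ℕ → ℝ) (s : ℝ) : ℝ := Jint (fun r => (stepFn M sigv lamv r) ^ 2) s

/-- The normalized speed function `𝒥̄_{σ²} = 𝒥_{σ²}/𝒥_{σ²}(1)`. -/
def JsigBar (M : ℕ) (sigv lamv : ℕ → ℝ) (s : ℝ) : ℝ := Jsig2 M sigv lamv s / Jsig2 M sigv lamv 1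

/-- The concave hull on `[0,1]` of a function `f`, i.e. the pointwise infimum over all
concave functions dominating `f` on `[0,1]`. -/
def concaveHull (f : ℝ → ℝ) (s : ℝ) : ℝ :=
  sInf {y | ∃ g : ℝ → ℝ, ConcaveOn ℝ (Set.Icc (0:ℝ) 1) g ∧
    (∀ t ∈ Set.Icc (0:ℝ) 1, f t ≤ g t) ∧ y = g s}

/-- The effective parameters: jump scales `0 = λ⁰ < … < λ^m = 1`, values
`σ̄_1 > … > σ̄_m > 0`, and the left-continuous non-increasing step function `σ̄`
such that `∫_0^s σ̄²` is the concavification of `𝒥_{σ²}`. -/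
def EffParams (M : ℕ) (sigv lamv : ℕ → ℝ) (m : ℕ) (sigb lamb : ℕ → ℝ) (sigbar : ℝ → ℝ) : Prop :=
  1 ≤ m ∧ m ≤ M ∧ lamb 0 = 0 ∧ lamb m = 1 ∧ (∀ j, j < m → lamb j < lamb (j + 1)) ∧
  (∀ l, 1 ≤ l → l < m → sigb (l + 1) < sigb l) ∧ (∀ l ∈ Finset.Icc 1 m, 0 < sigb l) ∧
  sigbar 0 = sigb 1 ∧
  (∀ l ∈ Finset.Icc 1 m, ∀ s : ℝ, lamb (l - 1) < s → s ≤ lamb l → sigbar s = sigb l) ∧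
  (∀ s : ℝ, 0 < s → s ≤ 1 →
    concaveHull (Jsig2 M sigv lamv) s = ∫ r in (0:ℝ)..s, (sigbar r) ^ 2)

/-- `γ* = 𝒥_{σ²/σ̄}(1)`. -/
def gammaStar (M : ℕ) (sigv lamv : ℕ → ℝ) (sigbar : ℝ → ℝ) : ℝ :=
  ∫ s in (0:ℝ)..1, (stepFn M sigv lamv s) ^ 2 / sigbar s

/-- The critical levels `γ^l = ∫_0^1 σ²(s)/σ̄(s ∧ λ^l) ds`, `γ⁰ = 0`. -/
def gammaL (M : ℕ) (sigv lamv : ℕ → ℝ) (lamb : ℕ → ℝ) (sigbar : ℝ → ℝ) (l : ℕ) : ℝ :=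
  if l = 0 then 0 else ∫ s in (0:ℝ)..1, (stepFn M sigv lamv s) ^ 2 / sigbar (min s (lamb l))

/-- `EntE` is the entropy function `𝓔` of the model. -/
def IsEntropy (M : ℕ) (sigv lamv : ℕ → ℝ) (m : ℕ) (lamb : ℕ → ℝ) (sigbar : ℝ → ℝ)
    (EntE : ℝ → ℝ) : Prop :=
  EntE 0 = 1 ∧
  ∀ l ∈ Finset.Icc 1 m, ∀ γ : ℝ,
    gammaL M sigv lamv lamb sigbar (l - 1) < γ → γ ≤ gammaL M sigv lamv lamb sigbar l →
      EntE γ = (1 - lamb (l - 1)) -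
        (γ - ∫ s in (0:ℝ)..(lamb (l - 1)), (stepFn M sigv lamv s) ^ 2 / sigbar s) ^ 2 /
          Jint2 (fun r => (stepFn M sigv lamv r) ^ 2) (lamb (l - 1)) 1

/-- The limiting free energy of the `REM(σ)` model. -/
def fREM (σ β : ℝ) : ℝ :=
  if (2 / σ) < β then 2 * (β / (2 / σ)) else 1 + (β / (2 / σ)) ^ 2

/-- The index `l_β`. -/
def lbeta (m : ℕ) (sigb : ℕ → ℝ) (β : ℝ) : ℕ :=
  if β ≤ 2 / sigb m then sInf {l : ℕ | 1 ≤ l ∧ β ≤ 2 / sigb l} else m + 1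

/-- The limiting free energy `f^ψ(β)`, written with the `l_β` split. -/
def fpsiLim (m : ℕ) (sigb lamb : ℕ → ℝ) (β : ℝ) : ℝ :=
  (∑ j ∈ Finset.Icc 1 (lbeta m sigb β - 1), (2 * β / (2 / sigb j)) * (lamb j - lamb (j - 1))) +
  ∑ j ∈ Finset.Icc (lbeta m sigb β) m, (1 + β ^ 2 / (2 / sigb j) ^ 2) * (lamb j - lamb (j - 1))

/-- The set `ℬ` of non-critical inverse temperatures. -/
def critSet (m : ℕ) (sigb : ℕ → ℝ) : Set ℝ :=
  {β | 0 < β ∧ ∀ j ∈ Finset.Icc 1 m, β ≠ 2 / sigb j}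

/-- The partition function `Z_N^ψ(β)`. -/
def ZN (N M : ℕ) (sigv lamv : ℕ → ℝ) (P : MeasureTheory.Measure FieldSp) (β : ℝ) (ω : FieldSp) : ℝ :=
  ∑ v ∈ VN N, Real.exp (β * psiFld N M sigv lamv P v ω)

/-- The free energy `f_N^ψ(β)` on `V_N`. -/
def freeEnergy (N M : ℕ) (sigv lamv : ℕ → ℝ) (P : MeasureTheory.Measure FieldSp) (β : ℝ) (ω : FieldSp) : ℝ :=
  (Real.log ((N : ℝ) ^ 2))⁻¹ * Real.log (ZN N M sigv lamv P β ω)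

/-- The set `A_{N,ρ}` of points at distance at least `N^{1−ρ}` from `ℤ² ∖ V_N`. -/
def AN (N : ℕ) (ρ : ℝ) : Finset Vtx :=
  (VN N).filter fun v => ∀ z : Vtx, z ∉ VN N →
    (N : ℝ) ^ ((1 : ℝ) - ρ) ≤ Real.sqrt (((v.1 : ℝ) - (z.1 : ℝ)) ^ 2 + ((v.2 : ℝ) - (z.2 : ℝ)) ^ 2)

/-- The restricted partition function `Z_{N,ρ}^ψ(β)`. -/
def ZNres (N M : ℕ) (sigv lamv : ℕ → ℝ) (P : MeasureTheory.Measure FieldSp) (β ρ : ℝ) (ω : FieldSp) : ℝ :=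
  ∑ v ∈ AN N ρ, Real.exp (β * psiFld N M sigv lamv P v ω)

/-- The free energy `f_{N,ρ}^ψ(β)` on `A_{N,ρ}`. -/
def freeEnergyRes (N M : ℕ) (sigv lamv : ℕ → ℝ) (P : MeasureTheory.Measure FieldSp) (β ρ : ℝ)
    (ω : FieldSp) : ℝ :=
  (Real.log ((N : ℝ) ^ 2))⁻¹ * Real.log (ZNres N M sigv lamv P β ρ ω)

/-- The Gibbs weight `𝒢_{β,N}({v})`. -/
def gibbsW (N M : ℕ) (sigv lamv : ℕ → ℝ) (P : MeasureTheory.Measure FieldSp) (β : ℝ) (v : Vtx)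
    (ω : FieldSp) : ℝ :=
  Real.exp (β * psiFld N M sigv lamv P v ω) / ZN N M sigv lamv P β ω

/-- The restricted Gibbs weight `𝒢_{β,N,ρ}({v})`. -/
def gibbsWres (N M : ℕ) (sigv lamv : ℕ → ℝ) (P : MeasureTheory.Measure FieldSp) (β ρ : ℝ) (v : Vtx)
    (ω : FieldSp) : ℝ :=
  Real.exp (β * psiFld N M sigv lamv P v ω) / ZNres N M sigv lamv P β ρ ω

/-- `E𝒢_{β,N}^{×s}[F]`: the mean over the disorder of the `s`-fold Gibbs average of `F`. -/
def gibbsExp (N M : ℕ) (sigv lamv : ℕ → ℝ) (P : MeasureTheory.Measure FieldSp) (β : ℝ) (s : ℕ)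
    (F : (Fin s → Vtx) → ℝ) : ℝ :=
  ∫ ω, (∑ vv ∈ Fintype.piFinset (fun _ : Fin s => VN N),
    (∏ i, gibbsW N M sigv lamv P β (vv i) ω) * F vv) ∂P

/-- `E𝒢_{β,N,ρ}^{×s}[F]`, with an `ω`-dependent integrand allowed. -/
def gibbsExpRes (N M : ℕ) (sigv lamv : ℕ → ℝ) (P : MeasureTheory.Measure FieldSp) (β ρ : ℝ) (s : ℕ)
    (F : (Fin s → Vtx) → FieldSp → ℝ) : ℝ :=
  ∫ ω, (∑ vv ∈ Fintype.piFinset (fun _ : Fin s => AN N ρ),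
    (∏ i, gibbsWres N M sigv lamv P β ρ (vv i) ω) * F vv ω) ∂P

/-- `E𝒢_{β,N}^{×s}[F]`, with an `ω`-dependent integrand allowed. -/
def gibbsExpW (N M : ℕ) (sigv lamv : ℕ → ℝ) (P : MeasureTheory.Measure FieldSp) (β : ℝ) (s : ℕ)
    (F : (Fin s → Vtx) → FieldSp → ℝ) : ℝ :=
  ∫ ω, (∑ vv ∈ Fintype.piFinset (fun _ : Fin s => VN N),
    (∏ i, gibbsW N M sigv lamv P β (vv i) ω) * F vv ω) ∂P

/-- The covariance `E[ψ_v ψ_{v'}]`. -/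
def psiCov (N M : ℕ) (sigv lamv : ℕ → ℝ) (P : MeasureTheory.Measure FieldSp) (v v' : Vtx) : ℝ :=
  ∫ ω, psiFld N M sigv lamv P v ω * psiFld N M sigv lamv P v' ω ∂P

/-- `C₀` is a constant witnessing the uniform variance upper bound
`max_{v∈V_N} E[ψ_v²] ≤ 𝒥_{σ²}(1) log N + C₀` for `N` large. -/
def IsVarBound (M : ℕ) (sigv lamv : ℕ → ℝ) (P : ℕ → MeasureTheory.Measure FieldSp) (C₀ : ℝ) : Prop :=
  0 < C₀ ∧ ∃ N₀ : ℕ, ∀ N ≥ N₀, ∀ v ∈ VN N,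
    psiCov N M sigv lamv (P N) v v ≤ Jsig2 M sigv lamv 1 * Real.log N + C₀

/-- The overlap `q^N(v,v')`. -/
def overlapQ (N M : ℕ) (sigv lamv : ℕ → ℝ) (P : MeasureTheory.Measure FieldSp) (C₀ : ℝ) (v v' : Vtx) : ℝ :=
  psiCov N M sigv lamv P v v' / (Jsig2 M sigv lamv 1 * Real.log N + C₀)

/-- Convergence in probability to a constant, for a sequence of random variables on a
sequence of probability spaces. -/
def TendstoInProb (P : ℕ → MeasureTheory.Measure FieldSp) (X : ℕ → FieldSp → ℝ) (c : ℝ) : Prop :=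
  ∀ ε : ℝ, 0 < ε → Tendsto (fun N => P N {ω | ε < |X N ω - c|}) atTop (nhds 0)

/-- Convergence in `L^p` to a constant. -/
def TendstoLp (P : ℕ → MeasureTheory.Measure FieldSp) (X : ℕ → FieldSp → ℝ) (p c : ℝ) : Prop :=
  Tendsto (fun N => ∫ ω, |X N ω - c| ^ p ∂(P N)) atTop (nhds 0)

/-- The branching scale `b_N(v,v')`. -/
def bScale (N : ℕ) (v v' : Vtx) : ℝ :=
  sSup {lam : ℝ | lam ∈ Set.Icc (0:ℝ) 1 ∧ ((nbhd N lam v) ∩ (nbhd N lam v')).Nonempty}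

end GFFCommon

/-!
The partition function `Z_N` satisfies `Z_N ≥ 1` almost surely, because `ψ` vanishes at the corners
of `V_N`, and `E[Z_N] ≤ exp (C log N²)`, because `ψ_v` is sub-Gaussian with variance proxy
`O(log N)`: a conditional expectation of a sub-Gaussian variable is sub-Gaussian by Jensen's
inequality, `ψ_v` is a linear combination of such variables, and the variance `G(v,v)` of `φ_v` is
`O(log N)` by comparison of the Green function with the discretely subharmonic function
`x ↦ log (1 + |x - v|²)`. Since `exp |f_N|` is the power `Z_N ^ (1 / log N²)`, Jensen's inequality
for concave powers gives `E[exp |f_N|] ≤ exp C` uniformly in `N`. This bounds every moment of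
`f_N`, and a bound on the `2p`-th moments makes the `p`-th powers uniformly integrable.
-/

section PotentialTheory

/-- The average of a function on `ℤ²` over the four neighbours of a vertex, i.e. the transition
operator of simple random walk. -/
noncomputable def neighborMean (u : Vtx → ℝ) (x : Vtx) : ℝ :=
  (u (x.1 + 1, x.2) + u (x.1 - 1, x.2) + u (x.1, x.2 + 1) + u (x.1, x.2 - 1)) / 4

/-- The function `x ↦ log (1 + |x - y|²)`, a discretely subharmonic substitute for the logarithmic
potential kernel with pole at `y`. -/
noncomputable def logBarrier (y x : Vtx) : ℝ :=
  Real.log (1 + ((x.1 : ℝ) - y.1) ^ 2 + ((x.2 : ℝ) - y.2) ^ 2)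

lemma mem_intr_iff {B : Finset Vtx} {x : Vtx} :
    x ∈ intr B ↔ x ∈ B ∧ (x.1 + 1, x.2) ∈ B ∧ (x.1 - 1, x.2) ∈ B ∧
      (x.1, x.2 + 1) ∈ B ∧ (x.1, x.2 - 1) ∈ B := by
  simp only [intr, bdry, Finset.mem_sdiff, Finset.mem_filter]
  tauto

lemma mem_of_mem_bdry {B : Finset Vtx} {x : Vtx} (hx : x ∈ bdry B) : x ∈ B :=
  Finset.mem_of_mem_filter x hx

lemma notMem_intr_of_mem_bdry {B : Finset Vtx} {x : Vtx} (hx : x ∈ bdry B) : x ∉ intr B :=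
  fun h ↦ (Finset.mem_sdiff.1 h).2 hx

lemma mem_bdry_or_mem_intr {B : Finset Vtx} {x : Vtx} (hx : x ∈ B) : x ∈ bdry B ∨ x ∈ intr B := by
  simp only [intr, Finset.mem_sdiff]
  tauto

lemma le_of_le_neighborMean_of_le_bdry {B : Finset Vtx} {u : Vtx → ℝ} {K : ℝ}
    (hsub : ∀ x ∈ intr B, u x ≤ neighborMean u x) (hbdry : ∀ x ∈ bdry B, u x ≤ K)
    {x : Vtx} (hx : x ∈ B) : u x ≤ K := by
  by_contra! hKx
  obtain ⟨m, hmB, hm⟩ := B.exists_max_image u ⟨x, hx⟩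
  -- The right neighbour of a rightmost maximizer would be a maximizer as well.
  obtain ⟨z, hz, hright⟩ := (B.filter fun w ↦ u w = u m).exists_max_image Prod.fst
    ⟨m, by simp [hmB]⟩
  obtain ⟨hzB, hzm⟩ := Finset.mem_filter.1 hz
  have hz_intr : z ∈ intr B := (mem_bdry_or_mem_intr hzB).resolve_left fun h ↦ by
    linarith [hbdry z h, hm x hx]
  obtain ⟨-, hE, hW, hN, hS⟩ := mem_intr_iff.1 hz_intr
  have hmean := hsub z hz_intr
  rw [neighborMean] at hmean
  have hE_max : u (z.1 + 1, z.2) = u m := by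
    linarith [hm _ hE, hm _ hW, hm _ hN, hm _ hS]
  have := hright (z.1 + 1, z.2) (by simp [hE, hE_max])
  simp at this

lemma log_one_add_sq_add_sq_le_mean (a b : ℝ) :
    Real.log (1 + a ^ 2 + b ^ 2) ≤
      (Real.log (1 + (a + 1) ^ 2 + b ^ 2) + Real.log (1 + (a - 1) ^ 2 + b ^ 2) +
        Real.log (1 + a ^ 2 + (b + 1) ^ 2) + Real.log (1 + a ^ 2 + (b - 1) ^ 2)) / 4 := by
  have hprod : (1 + a ^ 2 + b ^ 2) ^ 4 ≤
      (1 + (a + 1) ^ 2 + b ^ 2) * (1 + (a - 1) ^ 2 + b ^ 2) *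
        (1 + a ^ 2 + (b + 1) ^ 2) * (1 + a ^ 2 + (b - 1) ^ 2) := by
    have hdiff : (1 + (a + 1) ^ 2 + b ^ 2) * (1 + (a - 1) ^ 2 + b ^ 2) *
          (1 + a ^ 2 + (b + 1) ^ 2) * (1 + a ^ 2 + (b - 1) ^ 2) - (1 + a ^ 2 + b ^ 2) ^ 4 =
        2 * (a ^ 2 + b ^ 2) ^ 2 + 12 * (a ^ 2 + b ^ 2) + 16 * (a * b) ^ 2 + 15 := by ring
    rw [← sub_nonneg, hdiff]
    positivity
  have hlog := Real.log_le_log (by positivity) hprod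
  rw [Real.log_pow, Real.log_mul (by positivity) (by positivity),
    Real.log_mul (by positivity) (by positivity), Real.log_mul (by positivity) (by positivity)]
    at hlog
  push_cast at hlog
  linarith

@[simp]
lemma logBarrier_self (y : Vtx) : logBarrier y y = 0 := by
  simp [logBarrier]

lemma neighborMean_logBarrier_self (y : Vtx) : neighborMean (logBarrier y) y = Real.log 2 := by
  simp only [neighborMean, logBarrier]
  push_cast
  ring_nf

lemma logBarrier_le_neighborMean (y x : Vtx) :
    logBarrier y x ≤ neighborMean (logBarrier y) x := by
  have h := log_one_add_sq_add_sq_le_mean ((x.1 : ℝ) - y.1) ((x.2 : ℝ) - y.2)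
  simp only [neighborMean, logBarrier]
  push_cast
  convert! h using 6 <;> ring_nf

theorem IsGreenFn.le_mul_sub_logBarrier {B : Finset Vtx} {G : Vtx → Vtx → ℝ}
    (hG : IsGreenFn B G) {y : Vtx} {R : ℝ} (hR : ∀ x ∈ B, logBarrier y x ≤ R)
    {x : Vtx} (hx : x ∈ B) :
    G x y ≤ Real.pi / 2 / Real.log 2 * (R - logBarrier y x) := by
  have hc : 0 ≤ Real.pi / 2 / Real.log 2 := by positivity
  have hc_log : Real.pi / 2 / Real.log 2 * Real.log 2 = Real.pi / 2 := by field_simp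
  set c := Real.pi / 2 / Real.log 2
  by_cases hy : y ∈ intr B
  · suffices G x y + c * logBarrier y x ≤ c * R by linarith
    refine le_of_le_neighborMean_of_le_bdry (B := B) (u := fun z ↦ G z y + c * logBarrier y z)
      (fun z hz ↦ ?_) (fun z hz ↦ ?_) hx
    · have hmean : neighborMean (fun z ↦ G z y + c * logBarrier y z) z =
          neighborMean (G · y) z + c * neighborMean (logBarrier y) z := by
        simp only [neighborMean]; ring
      have hGz : G z y = neighborMean (G · y) z + Real.pi / 2 * (if z = y then 1 else 0) :=
        hG.2 y hy z hz
      rw [hmean, hGz]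
      split_ifs with hzy
      · rw [hzy, neighborMean_logBarrier_self, hc_log, logBarrier_self]
        linarith
      · linarith [mul_le_mul_of_nonneg_left (logBarrier_le_neighborMean y z) hc]
    · rw [hG.1 z y (Or.inl (notMem_intr_of_mem_bdry hz)), zero_add]
      exact mul_le_mul_of_nonneg_left (hR z (mem_of_mem_bdry hz)) hc
  · rw [hG.1 x y (Or.inr hy)]
    exact mul_nonneg hc (sub_nonneg.2 (hR x hx))

lemma mem_VN_iff {N : ℕ} {x : Vtx} :
    x ∈ VN N ↔ (0 ≤ x.1 ∧ 0 ≤ x.2) ∧ x.1 ≤ N ∧ x.2 ≤ N := by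
  simp [VN, Finset.mem_Icc, Prod.le_def]

lemma card_VN (N : ℕ) : (VN N).card = (N + 1) ^ 2 := by
  simp [VN, Finset.card_Icc_prod, sq]

lemma origin_mem_bdry_VN (N : ℕ) : ((0, 0) : Vtx) ∈ bdry (VN N) := by
  simp [bdry, mem_VN_iff]

lemma logBarrier_le_of_mem_VN {N : ℕ} {x y : Vtx} (hx : x ∈ VN N) (hy : y ∈ VN N) :
    logBarrier y x ≤ Real.log (1 + 2 * (N : ℝ) ^ 2) := by
  rw [mem_VN_iff] at hx hy
  have sq_sub_le {a b : ℤ} (ha : 0 ≤ a ∧ a ≤ N) (hb : 0 ≤ b ∧ b ≤ N) :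
      ((a : ℝ) - b) ^ 2 ≤ (N : ℝ) ^ 2 := by
    have : (a - b) ^ 2 ≤ (N : ℤ) ^ 2 := sq_le_sq' (by omega) (by omega)
    exact_mod_cast this
  refine Real.log_le_log (by positivity) ?_
  linarith [sq_sub_le ⟨hx.1.1, hx.2.1⟩ ⟨hy.1.1, hy.2.1⟩,
    sq_sub_le ⟨hx.1.2, hx.2.2⟩ ⟨hy.1.2, hy.2.2⟩]

theorem IsGreenFn.diag_le {N : ℕ} {G : Vtx → Vtx → ℝ} (hG : IsGreenFn (VN N) G) {v : Vtx}
    (hv : v ∈ VN N) :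
    G v v ≤ Real.pi / 2 / Real.log 2 * Real.log (1 + 2 * (N : ℝ) ^ 2) := by
  simpa using hG.le_mul_sub_logBarrier (fun x hx ↦ logBarrier_le_of_mem_VN hx hv) hv

end PotentialTheory

section SubGaussian

open MeasureTheory ProbabilityTheory
open scoped NNReal

variable {Ω : Type*} {m mΩ : MeasurableSpace Ω} {μ : Measure Ω} {X Y : Ω → ℝ}

lemma hasSubgaussianMGF_of_map_eq_gaussianReal {V : ℝ≥0} (hX : μ.map X = gaussianReal 0 V) :
    HasSubgaussianMGF X V μ where
  integrable_exp_mul t := by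
    have hX_meas : AEMeasurable X μ := aemeasurable_of_map_neZero (by rw [hX]; infer_instance)
    have h := integrable_exp_mul_gaussianReal (μ := 0) (v := V) t
    rw [← hX] at h
    exact h.comp_aemeasurable hX_meas
  mgf_le t := by simp [mgf_gaussianReal hX]

lemma hasSubgaussianMGF_mono {c d : ℝ≥0} (hX : HasSubgaussianMGF X c μ) (hcd : c ≤ d) :
    HasSubgaussianMGF X d μ where
  integrable_exp_mul := hX.integrable_exp_mul
  mgf_le t := (hX.mgf_le t).trans (by gcongr)

theorem hasSubgaussianMGF_condExp [IsFiniteMeasure μ] {c : ℝ≥0} (hm : m ≤ mΩ)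
    (hX : HasSubgaussianMGF X c μ) : HasSubgaussianMGF (μ[X | m]) c μ := by
  have jensen (t : ℝ) : ∀ᵐ ω ∂μ, Real.exp (t * (μ[X | m]) ω) ≤
      (μ[fun ω ↦ Real.exp (t * X ω) | m]) ω := by
    have hconv : ConvexOn ℝ Set.univ fun x : ℝ ↦ Real.exp (t * x) := by
      simpa [Function.comp_def] using convexOn_exp.comp_linearMap (LinearMap.mul ℝ ℝ t)
    have hcont : Continuous fun x : ℝ ↦ Real.exp (t * x) := by fun_prop
    exact hconv.map_condExp_le_univ hm hcont.lowerSemicontinuous hX.integrable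
      (hX.integrable_exp_mul t)
  have hint (t : ℝ) : Integrable (fun ω ↦ Real.exp (t * (μ[X | m]) ω)) μ := by
    have hmeas : AEMeasurable (μ[X | m]) μ := integrable_condExp.aemeasurable
    refine Integrable.mono' (g := μ[fun ω ↦ Real.exp (t * X ω) | m]) integrable_condExp
      (by fun_prop) ((jensen t).mono fun ω hω ↦ ?_)
    rwa [Real.norm_of_nonneg (Real.exp_pos _).le]
  refine ⟨hint, fun t ↦ ?_⟩
  calc mgf (μ[X | m]) μ t
      ≤ ∫ ω, (μ[fun ω ↦ Real.exp (t * X ω) | m]) ω ∂μ :=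
        integral_mono_ae (hint t) integrable_condExp (jensen t)
    _ = mgf X μ t := integral_condExp hm
    _ ≤ Real.exp (c * t ^ 2 / 2) := hX.mgf_le t

lemma hasSubgaussianMGF_add_sq {a b : ℝ≥0} (hX : HasSubgaussianMGF X (a ^ 2) μ)
    (hY : HasSubgaussianMGF Y (b ^ 2) μ) :
    HasSubgaussianMGF (fun ω ↦ X ω + Y ω) ((a + b) ^ 2) μ := by
  simpa using hX.add hY

lemma hasSubgaussianMGF_sub_sq {a b : ℝ≥0} (hX : HasSubgaussianMGF X (a ^ 2) μ)
    (hY : HasSubgaussianMGF Y (b ^ 2) μ) :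
    HasSubgaussianMGF (fun ω ↦ X ω - Y ω) ((a + b) ^ 2) μ := by
  simpa [sub_eq_add_neg] using hasSubgaussianMGF_add_sq hX hY.neg

lemma hasSubgaussianMGF_const_mul_sq {a : ℝ≥0} (hX : HasSubgaussianMGF X (a ^ 2) μ) (r : ℝ) :
    HasSubgaussianMGF (fun ω ↦ r * X ω) ((‖r‖₊ * a) ^ 2) μ := by
  have hnorm : ‖r‖₊ ^ 2 = NNReal.mk (r ^ 2) (sq_nonneg r) := NNReal.eq (by simp)
  rw [mul_pow, hnorm]
  exact hX.const_mul r

lemma hasSubgaussianMGF_sum_sq [IsZeroOrProbabilityMeasure μ] {ι : Type*} {s : Finset ι}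
    {X : ι → Ω → ℝ} {a : ι → ℝ≥0} (hX : ∀ i ∈ s, HasSubgaussianMGF (X i) (a i ^ 2) μ) :
    HasSubgaussianMGF (fun ω ↦ ∑ i ∈ s, X i ω) ((∑ i ∈ s, a i) ^ 2) μ := by
  induction s using Finset.cons_induction with
  | empty => simp
  | cons i s hi ih =>
    simp only [Finset.sum_cons]
    exact hasSubgaussianMGF_add_sq (hX i (by simp))
      (ih fun j hj ↦ hX j (Finset.mem_cons_of_mem hj))

end SubGaussian

section Moments

open MeasureTheory ProbabilityTheory

variable {Ω : Type*} {mΩ : MeasurableSpace Ω} {μ : Measure Ω}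

theorem integral_exp_abs_mul_log_le [IsProbabilityMeasure μ] {Z : Ω → ℝ} (hZ : Integrable Z μ)
    (hZ_one : ∀ᵐ ω ∂μ, 1 ≤ Z ω) {a : ℝ} (ha₀ : 0 ≤ a) (ha₁ : a ≤ 1) :
    Integrable (fun ω ↦ Real.exp |a * Real.log (Z ω)|) μ ∧
      ∫ ω, Real.exp |a * Real.log (Z ω)| ∂μ ≤ (∫ ω, Z ω ∂μ) ^ a := by
  have hrpow : (fun ω ↦ Real.exp |a * Real.log (Z ω)|) =ᵐ[μ] fun ω ↦ Z ω ^ a := by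
    filter_upwards [hZ_one] with ω hω
    rw [abs_of_nonneg (mul_nonneg ha₀ (Real.log_nonneg hω)), mul_comm,
      Real.rpow_def_of_pos (zero_lt_one.trans_le hω)]
  have hint : Integrable (fun ω ↦ Z ω ^ a) μ := by
    refine hZ.mono' (hZ.aemeasurable.pow_const a).aestronglyMeasurable ?_
    filter_upwards [hZ_one] with ω hω
    rw [Real.norm_of_nonneg (by positivity)]
    exact Real.rpow_le_self_of_one_le hω ha₁
  refine ⟨hint.congr hrpow.symm, (integral_congr_ae hrpow).trans_le ?_⟩
  exact (Real.concaveOn_rpow ha₀ ha₁).le_map_integral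
    (Real.continuous_rpow_const ha₀).continuousOn isClosed_Ici
    (hZ_one.mono fun ω hω ↦ zero_le_one.trans hω) hZ hint

theorem integral_abs_rpow_le_of_integrable_exp_abs {f : Ω → ℝ} (hf : AEMeasurable f μ)
    (hexp : Integrable (fun ω ↦ Real.exp |f ω|) μ) {q : ℝ} (hq : 0 ≤ q) :
    Integrable (fun ω ↦ |f ω| ^ q) μ ∧
      ∫ ω, |f ω| ^ q ∂μ ≤ q ^ q * ∫ ω, Real.exp |f ω| ∂μ := by
  have hle (ω : Ω) : |f ω| ^ q ≤ q ^ q * Real.exp |f ω| := by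
    simpa using rpow_abs_le_mul_exp_abs (f ω) hq one_ne_zero
  have hint : Integrable (fun ω ↦ |f ω| ^ q) μ := by
    refine (hexp.const_mul (q ^ q)).mono' (by fun_prop) (ae_of_all _ fun ω ↦ ?_)
    rw [Real.norm_of_nonneg (by positivity)]
    exact hle ω
  refine ⟨hint, ?_⟩
  rw [← integral_const_mul]
  exact integral_mono hint (hexp.const_mul _) hle

lemma integral_mul_ite_lt_le_integral_sq_div {X : Ω → ℝ} (hX : Integrable (fun ω ↦ X ω ^ 2) μ)
    {α : ℝ} (hα : 0 < α) :
    ∫ ω, X ω * (if α < X ω then 1 else 0) ∂μ ≤ (∫ ω, X ω ^ 2 ∂μ) / α := by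
  rw [← integral_div]
  refine integral_mono_of_nonneg (ae_of_all _ fun ω ↦ ?_) (hX.div_const α) (ae_of_all _ fun ω ↦ ?_)
  · dsimp only [Pi.zero_apply]
    split_ifs with h <;> nlinarith
  · dsimp only
    rw [le_div_iff₀ hα]
    split_ifs with h <;> nlinarith

theorem tendsto_iSup_integral_mul_ite_lt_of_integral_sq_le {ι : Type*} {Ω : ι → Type*}
    [∀ i, MeasurableSpace (Ω i)] {μ : ∀ i, Measure (Ω i)} {X : ∀ i, Ω i → ℝ} {K : ℝ}
    (hX : ∀ i, Integrable (fun ω ↦ X i ω ^ 2) (μ i)) (hK : ∀ i, ∫ ω, X i ω ^ 2 ∂(μ i) ≤ K) :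
    Tendsto (fun α : ℝ ↦ ⨆ i, ∫ ω, X i ω * (if α < X i ω then 1 else 0) ∂(μ i))
      atTop (nhds 0) := by
  have hlim : Tendsto (fun α : ℝ ↦ |K| / α) atTop (nhds 0) :=
    tendsto_const_nhds.div_atTop tendsto_id
  refine squeeze_zero' ?_ ?_ hlim
  · filter_upwards [eventually_gt_atTop 0] with α hα
    refine Real.iSup_nonneg fun i ↦ integral_nonneg fun ω ↦ ?_
    dsimp only [Pi.zero_apply]
    split_ifs with h <;> linarith
  · filter_upwards [eventually_gt_atTop 0] with α hα
    refine Real.iSup_le (fun i ↦ ?_) (by positivity)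
    refine (integral_mul_ite_lt_le_integral_sq_div (hX i) hα).trans ?_
    gcongr
    exact (hK i).trans (le_abs_self K)

end Moments

section FreeEnergy

open MeasureTheory ProbabilityTheory
open scoped NNReal

variable {N M : ℕ} {sigv lamv : ℕ → ℝ} {P : Measure FieldSp} {v : Vtx} {β : ℝ}

lemma scaleAlg_le (N : ℕ) (lam : ℝ) (v : Vtx) : scaleAlg N lam v ≤ MeasurableSpace.pi :=
  iSup₂_le fun w _ ↦ (measurable_pi_apply w).comap_le

lemma hasSubgaussianMGF_psiFld [IsProbabilityMeasure P] {c : ℝ≥0}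
    (hv : HasSubgaussianMGF (fun ω : FieldSp ↦ ω v) c P) :
    HasSubgaussianMGF (psiFld N M sigv lamv P v)
      ((2 * ∑ i ∈ Finset.Icc 1 M, ‖sigv i‖₊) ^ 2 * c) P := by
  have hphi (lam : ℝ) : HasSubgaussianMGF (phiScale N P v lam) (c.sqrt ^ 2) P := by
    rw [NNReal.sq_sqrt]
    exact hasSubgaussianMGF_condExp (scaleAlg_le N lam v) hv
  have hsum := hasSubgaussianMGF_sum_sq (s := Finset.Icc 1 M) fun i _ ↦
    hasSubgaussianMGF_const_mul_sq
      (hasSubgaussianMGF_sub_sq (hphi (lamv i)) (hphi (lamv (i - 1)))) (sigv i)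
  convert! hsum using 1
  rw [← Finset.sum_mul, ← two_mul, mul_pow, mul_pow, mul_pow, NNReal.sq_sqrt]
  ring

lemma IsGFF.exists_isGreenFn_hasSubgaussianMGF_eval (hP : IsGFF N P) :
    ∃ G, IsGreenFn (VN N) G ∧
      ∀ v ∈ VN N, HasSubgaussianMGF (fun ω : FieldSp ↦ ω v) (G v v).toNNReal P := by
  obtain ⟨-, G, hG, hlaw⟩ := hP
  refine ⟨G, hG, fun v hv ↦ hasSubgaussianMGF_of_map_eq_gaussianReal ?_⟩
  simpa [hv] using hlaw fun w ↦ if w = v then 1 else 0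

lemma IsGFF.psiFld_ae_eq_zero (hP : IsGFF N P) (hv : v ∈ bdry (VN N)) :
    psiFld N M sigv lamv P v =ᵐ[P] 0 := by
  have := hP.1
  obtain ⟨G, hG, heval⟩ := hP.exists_isGreenFn_hasSubgaussianMGF_eval
  have hψ := hasSubgaussianMGF_psiFld (N := N) (M := M) (sigv := sigv) (lamv := lamv)
    (heval v (mem_of_mem_bdry hv))
  rw [hG.1 v v (Or.inl (notMem_intr_of_mem_bdry hv)), Real.toNNReal_zero, mul_zero] at hψ
  exact hψ.ae_eq_zero_of_hasSubgaussianMGF_zero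

lemma IsGFF.one_le_ZN (hP : IsGFF N P) : ∀ᵐ ω ∂P, 1 ≤ ZN N M sigv lamv P β ω := by
  filter_upwards [hP.psiFld_ae_eq_zero (M := M) (sigv := sigv) (lamv := lamv)
    (origin_mem_bdry_VN N)] with ω hω
  calc (1 : ℝ) = Real.exp (β * psiFld N M sigv lamv P (0, 0) ω) := by simp [hω]
    _ ≤ ZN N M sigv lamv P β ω :=
      Finset.single_le_sum (f := fun v ↦ Real.exp (β * psiFld N M sigv lamv P v ω))
        (fun v _ ↦ (Real.exp_pos _).le) (mem_of_mem_bdry (origin_mem_bdry_VN N))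

/-- A variance proxy for every `φ_v`, `v ∈ V_N`, of order `log N`. -/
noncomputable def fieldProxy (N : ℕ) : ℝ≥0 :=
  (Real.pi / 2 / Real.log 2 * Real.log (1 + 2 * (N : ℝ) ^ 2)).toNNReal

lemma coe_fieldProxy (N : ℕ) :
    (fieldProxy N : ℝ) = Real.pi / 2 / Real.log 2 * Real.log (1 + 2 * (N : ℝ) ^ 2) := by
  refine Real.coe_toNNReal _ (mul_nonneg (by positivity) (Real.log_nonneg ?_))
  linarith [sq_nonneg (N : ℝ)]

lemma IsGFF.hasSubgaussianMGF_eval (hP : IsGFF N P) (hv : v ∈ VN N) :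
    HasSubgaussianMGF (fun ω : FieldSp ↦ ω v) (fieldProxy N) P := by
  obtain ⟨G, hG, heval⟩ := hP.exists_isGreenFn_hasSubgaussianMGF_eval
  exact hasSubgaussianMGF_mono (heval v hv) (Real.toNNReal_le_toNNReal (hG.diag_le hv))

/-- A variance proxy for every `ψ_v`, `v ∈ V_N`, of order `log N`: the increments
`φ_v(λ_i) − φ_v(λ_{i−1})` enter `ψ_v` with weight `σ_i`, and each consists of two conditional
expectations of `φ_v`. -/
noncomputable def psiProxy (N M : ℕ) (sigv : ℕ → ℝ) : ℝ≥0 :=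
  (2 * ∑ i ∈ Finset.Icc 1 M, ‖sigv i‖₊) ^ 2 * fieldProxy N

lemma IsGFF.integral_ZN_le (hP : IsGFF N P) :
    Integrable (ZN N M sigv lamv P β) P ∧
      ∫ ω, ZN N M sigv lamv P β ω ∂P ≤
        (N + 1) ^ 2 * Real.exp (psiProxy N M sigv * β ^ 2 / 2) := by
  have := hP.1
  have hψ {v : Vtx} (hv : v ∈ VN N) : HasSubgaussianMGF (psiFld N M sigv lamv P v)
      (psiProxy N M sigv) P :=
    hasSubgaussianMGF_psiFld (hP.hasSubgaussianMGF_eval hv)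
  refine ⟨integrable_finsetSum _ fun v hv ↦ (hψ hv).integrable_exp_mul β, ?_⟩
  calc ∫ ω, ZN N M sigv lamv P β ω ∂P
      = ∑ v ∈ VN N, mgf (psiFld N M sigv lamv P v) P β :=
        integral_finsetSum _ fun v hv ↦ (hψ hv).integrable_exp_mul β
    _ ≤ ∑ v ∈ VN N, Real.exp (psiProxy N M sigv * β ^ 2 / 2) :=
        Finset.sum_le_sum fun v hv ↦ (hψ hv).mgf_le β
    _ = (N + 1) ^ 2 * Real.exp (psiProxy N M sigv * β ^ 2 / 2) := by simp [card_VN]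

lemma log_one_add_two_mul_sq_le (hN : 2 ≤ N) :
    Real.log (1 + 2 * (N : ℝ) ^ 2) ≤ 2 * Real.log ((N : ℝ) ^ 2) := by
  have hN' : (2 : ℝ) ^ 2 ≤ (N : ℝ) ^ 2 := by gcongr; exact_mod_cast hN
  have : 1 + 2 * (N : ℝ) ^ 2 ≤ ((N : ℝ) ^ 2) ^ 2 := by nlinarith
  exact (Real.log_le_log (by positivity) this).trans_eq (by rw [Real.log_pow]; norm_num)

lemma exists_integral_ZN_le_exp (M : ℕ) (sigv lamv : ℕ → ℝ) (β : ℝ) :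
    ∃ C : ℝ, 0 ≤ C ∧ ∀ N : ℕ, 2 ≤ N → ∀ P : Measure FieldSp, IsGFF N P →
      ∫ ω, ZN N M sigv lamv P β ω ∂P ≤ Real.exp (C * Real.log ((N : ℝ) ^ 2)) := by
  set κ : ℝ := 1 + ((2 * ∑ i ∈ Finset.Icc 1 M, ‖sigv i‖₊ : ℝ≥0) : ℝ) ^ 2 *
    (Real.pi / 2 / Real.log 2) * β ^ 2 / 2
  have hκ₀ : 0 ≤ κ := by positivity
  refine ⟨2 * κ, by positivity, fun N hN P hP ↦ hP.integral_ZN_le.2.trans ?_⟩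
  have hN' : (2 : ℝ) ≤ N := by exact_mod_cast hN
  set ℓ := Real.log (1 + 2 * (N : ℝ) ^ 2)
  have hcard : ((N : ℝ) + 1) ^ 2 ≤ Real.exp ℓ := by
    rw [Real.exp_log (by positivity)]
    nlinarith
  calc ((N : ℝ) + 1) ^ 2 * Real.exp (psiProxy N M sigv * β ^ 2 / 2)
      ≤ Real.exp ℓ * Real.exp (psiProxy N M sigv * β ^ 2 / 2) := by gcongr
    _ = Real.exp (κ * ℓ) := by
      rw [← Real.exp_add, psiProxy, NNReal.coe_mul, NNReal.coe_pow, coe_fieldProxy]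
      congr 1
      simp only [κ, ℓ]
      ring
    _ ≤ Real.exp (2 * κ * Real.log ((N : ℝ) ^ 2)) := by
      rw [Real.exp_le_exp, mul_comm 2 κ, mul_assoc]
      exact mul_le_mul_of_nonneg_left (log_one_add_two_mul_sq_le hN) hκ₀

lemma freeEnergy_eq_zero_of_lt_two (hN : N < 2) (ω : FieldSp) :
    freeEnergy N M sigv lamv P β ω = 0 := by
  -- The prefactor `(log N²)⁻¹` is `0⁻¹ = 0`.
  interval_cases N <;> simp [freeEnergy]

lemma one_le_log_sq (hN : 2 ≤ N) : 1 ≤ Real.log ((N : ℝ) ^ 2) := by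
  have hN' : (2 : ℝ) ≤ N := by exact_mod_cast hN
  rw [Real.le_log_iff_exp_le (by positivity)]
  nlinarith [Real.exp_one_lt_three]

theorem exists_integral_exp_abs_freeEnergy_le (M : ℕ) (sigv lamv : ℕ → ℝ) (β : ℝ) :
    ∃ K : ℝ, ∀ (N : ℕ) (P : Measure FieldSp), IsGFF N P →
      Integrable (fun ω ↦ Real.exp |freeEnergy N M sigv lamv P β ω|) P ∧
        ∫ ω, Real.exp |freeEnergy N M sigv lamv P β ω| ∂P ≤ K := by
  obtain ⟨C, hC, hZ⟩ := exists_integral_ZN_le_exp M sigv lamv β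
  refine ⟨Real.exp C, fun N P hP ↦ ?_⟩
  have := hP.1
  obtain hN | hN := lt_or_ge N 2
  · simp [freeEnergy_eq_zero_of_lt_two hN, hC]
  have hL := one_le_log_sq hN
  set L := Real.log ((N : ℝ) ^ 2)
  have hL₀ : 0 < L := by linarith
  obtain ⟨hint, hle⟩ := integral_exp_abs_mul_log_le hP.integral_ZN_le.1
    (hP.one_le_ZN (M := M) (sigv := sigv) (lamv := lamv) (β := β)) (inv_nonneg.2 hL₀.le)
    (inv_le_one_of_one_le₀ hL)
  refine ⟨hint, hle.trans ?_⟩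
  calc (∫ ω, ZN N M sigv lamv P β ω ∂P) ^ L⁻¹
      ≤ Real.exp (C * L) ^ L⁻¹ :=
        Real.rpow_le_rpow (integral_nonneg fun ω ↦ Finset.sum_nonneg fun v _ ↦ (Real.exp_pos _).le)
          (hZ N hN P hP) (inv_nonneg.2 hL₀.le)
    _ = Real.exp C := by rw [← Real.exp_mul, mul_inv_cancel_right₀ hL₀.ne']

lemma IsGFF.aemeasurable_freeEnergy (hP : IsGFF N P) :
    AEMeasurable (freeEnergy N M sigv lamv P β) P :=
  (Real.measurable_log.comp_aemeasurable hP.integral_ZN_le.1.aemeasurable).const_mul _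

theorem exists_integral_abs_freeEnergy_rpow_le (M : ℕ) (sigv lamv : ℕ → ℝ) (β : ℝ) {q : ℝ}
    (hq : 0 ≤ q) :
    ∃ K : ℝ, ∀ (N : ℕ) (P : Measure FieldSp), IsGFF N P →
      Integrable (fun ω ↦ |freeEnergy N M sigv lamv P β ω| ^ q) P ∧
        ∫ ω, |freeEnergy N M sigv lamv P β ω| ^ q ∂P ≤ K := by
  obtain ⟨K, hK⟩ := exists_integral_exp_abs_freeEnergy_le M sigv lamv β
  refine ⟨q ^ q * K, fun N P hP ↦ ?_⟩
  obtain ⟨hint, hle⟩ :=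
    integral_abs_rpow_le_of_integrable_exp_abs hP.aemeasurable_freeEnergy (hK N P hP).1 hq
  exact ⟨hint, hle.trans (mul_le_mul_of_nonneg_left (hK N P hP).2 (by positivity))⟩

theorem free_energy_uniformly_integrable_general (M : ℕ) (sigv lamv : ℕ → ℝ)
    (P : ℕ → Measure FieldSp) (hGFF : ∀ N, IsGFF N (P N)) (β : ℝ) {p : ℝ} (hp : 0 ≤ p) :
    Tendsto (fun α : ℝ ↦ ⨆ N : ℕ,
        ∫ ω, |freeEnergy N M sigv lamv (P N) β ω| ^ p *
          (if α < |freeEnergy N M sigv lamv (P N) β ω| ^ p then (1 : ℝ) else 0) ∂(P N))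
      atTop (nhds 0) := by
  obtain ⟨K, hK⟩ := exists_integral_abs_freeEnergy_rpow_le M sigv lamv β (q := p * 2)
    (by positivity)
  simp only [Real.rpow_mul (abs_nonneg _), Real.rpow_two] at hK
  exact tendsto_iSup_integral_mul_ite_lt_of_integral_sq_le
    (fun N ↦ (hK N (P N) (hGFF N)).1) (fun N ↦ (hK N (P N) (hGFF N)).2)

end FreeEnergy

/-- **Lemma (Uniform integrability of `{|f_N^ψ(β)|^p}_N`).**
For every `β > 0` and `1 ≤ p < ∞`,
`lim_{α→∞} sup_{N∈ℕ} E[|f_N^ψ(β)|^p · 1_{{|f_N^ψ(β)|^p > α}}] = 0`. -/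
theorem free_energy_uniformly_integrable
    (M : ℕ) (sigv lamv : ℕ → ℝ) (hparams : ScaleParams M sigv lamv)
    (P : ℕ → MeasureTheory.Measure FieldSp) (hGFF : ∀ N, IsGFF N (P N))
    (β p : ℝ) (hβ : 0 < β) (hp : 1 ≤ p) :
    Filter.Tendsto (fun α : ℝ => ⨆ N : ℕ,
        ∫ ω, |freeEnergy N M sigv lamv (P N) β ω| ^ p *
          (if α < |freeEnergy N M sigv lamv (P N) β ω| ^ p then (1 : ℝ) else 0) ∂(P N))
      Filter.atTop (nhds 0) :=
  free_energy_uniformly_integrable_general M sigv lamv P hGFF β (zero_le_one.trans hp)
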